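/- Let G be a Gauss code, let i be a point of G with label (c, x), and let α and α' be the arcs immediately preceding and immediately following i. Then λ(α') = λ(α) − ε(c) if x = O, and λ(α') = λ(α) + ε(c) if x = U. (Thus λ satisfies the Cheng coloring rule at every classical crossing, so every virtual knot diagram admits a Cheng coloring.) -/

import Mathlib

open Finset

/-- A Gauss code with `n` crossings: the `2*n` points are arranged in the cyclic order
`0, 1, …, 2*n - 1` on `Fin (2*n)`; each pair `(c, x)` of a crossing `c : Fin n` and a
label `x : Bool` (`true` = O = over, `false` = U = under) occupies a distinct point
`pt (c, x)`, and each crossing carries a sign `±1`. -/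
structure GaussCode (n : ℕ) where
  pt : Fin n × Bool → Fin (2 * n)
  inj : Function.Injective pt
  sign : Fin n → ℤ
  sign_unit : ∀ c, sign c = 1 ∨ sign c = -1

namespace GaussCode

/-- The cyclic distance from `i` forward to `j` in `Fin m`. -/
def cdist {m : ℕ} (i j : Fin m) : ℕ := (j.val + m - i.val) % m

/-- The cyclically next point after `i`. -/
def next {m : ℕ} (i : Fin m) : Fin m := ⟨(i.val + 1) % m, Nat.mod_lt _ i.pos⟩

variable {n : ℕ}

/-- `firstO G i c` holds when the first occurrence of the crossing `c`, reading the
points cyclically forward starting from the arc immediately preceding the point `i`,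
carries the label O. (Arcs are indexed by the point they immediately precede.) -/
def firstO (G : GaussCode n) (i : Fin (2 * n)) (c : Fin n) : Prop :=
  cdist i (G.pt (c, true)) < cdist i (G.pt (c, false))

instance (G : GaussCode n) (i : Fin (2 * n)) (c : Fin n) : Decidable (G.firstO i c) :=
  inferInstanceAs (Decidable (_ < _))

/-- The Cheng coloring `λ` of the arc immediately preceding the point `i`: the sum of
`ε c` over all crossings `c` whose first occurrence, reading cyclically forward from
this arc, carries the label O. -/
def lam (G : GaussCode n) (i : Fin (2 * n)) : ℤ :=
  ∑ c : Fin n, if G.firstO i c then G.sign c else 0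

/-- The writhe of a Gauss code: the sum of the signs of its crossings. -/
def wr (G : GaussCode n) : ℤ := ∑ c : Fin n, G.sign c

/-- The weight `W(c) = λ_O(c) - λ_U(c) - ε(c)` of a crossing `c`, where `λ_O(c)`
(resp. `λ_U(c)`) is `λ` of the arc immediately preceding the O (resp. U) point of `c`. -/
def W (G : GaussCode n) (c : Fin n) : ℤ :=
  G.lam (G.pt (c, true)) - G.lam (G.pt (c, false)) - G.sign c

open LaurentPolynomial in
/-- The affine index polynomial `P_G(t) = Σ_c ε(c) (t^{W(c)} - 1) ∈ ℤ[t,t⁻¹]`. -/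
noncomputable def P (G : GaussCode n) : LaurentPolynomial ℤ :=
  ∑ c : Fin n, G.sign c • (T (G.W c) - 1)

end GaussCode

namespace GaussCode

/-! Passing the point `i` lowers the cyclic distance to every other point by one and sends the
distance to `i` itself from the smallest possible value to the largest. So the two points of a
crossing not at `i` keep their order, while the two points of the crossing at `i` swap theirs: only
the summand of that crossing changes. -/

section CyclicDistance

variable {m : ℕ} {i j k : Fin m}

theorem cdist_eq_ite (i j : Fin m) :
    cdist i j = if i.val ≤ j.val then j.val - i.val else j.val + m - i.val := by
  unfold cdist
  split_ifs with h
  · rw [Nat.sub_add_comm h, Nat.add_mod_right, Nat.mod_eq_of_lt (by omega)]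
  · exact Nat.mod_eq_of_lt (by omega)

theorem val_next (i : Fin m) : (next i).val = if i.val + 1 = m then 0 else i.val + 1 := by
  unfold next
  split_ifs with h
  · simp [h]
  · exact Nat.mod_eq_of_lt (by omega)

theorem cdist_self (i : Fin m) : cdist i i = 0 := by
  simp [cdist]

theorem cdist_lt (i j : Fin m) : cdist i j < m :=
  Nat.mod_lt _ i.pos

theorem cdist_next_self_add_one (i : Fin m) : cdist (next i) i + 1 = m := by
  rw [cdist_eq_ite, val_next]
  split_ifs <;> omega

theorem cdist_next_add_one (h : j ≠ i) : cdist (next i) j + 1 = cdist i j := by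
  have hval : j.val ≠ i.val := Fin.val_ne_of_ne h
  rw [cdist_eq_ite, cdist_eq_ite, val_next]
  split_ifs <;> omega

theorem cdist_self_lt_cdist (h : j ≠ i) : cdist i i < cdist i j := by
  rw [cdist_self, ← cdist_next_add_one h]
  exact Nat.succ_pos _

theorem cdist_next_lt_cdist_next_self (h : j ≠ i) : cdist (next i) j < cdist (next i) i := by
  rw [← Nat.add_lt_add_iff_right (k := 1), cdist_next_add_one h, cdist_next_self_add_one]
  exact cdist_lt i j

theorem cdist_next_lt_cdist_next_iff (hj : j ≠ i) (hk : k ≠ i) :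
    cdist (next i) j < cdist (next i) k ↔ cdist i j < cdist i k := by
  rw [← cdist_next_add_one hj, ← cdist_next_add_one hk, Nat.add_lt_add_iff_right]

end CyclicDistance

section ChengColoring

variable {m : ℕ} {ι A : Type*} {pt : ι × Bool → Fin m}

/-- The relation `firstO` for any family `ι` of crossings placed by `pt` on a circle of `m` points,
some of which may be unlabelled. -/
def OverFirst (pt : ι × Bool → Fin m) (i : Fin m) (c : ι) : Prop :=
  cdist i (pt (c, true)) < cdist i (pt (c, false))

instance (pt : ι × Bool → Fin m) (i : Fin m) (c : ι) : Decidable (OverFirst pt i c) :=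
  inferInstanceAs (Decidable (_ < _))

theorem overFirst_next_iff_of_ne (hpt : Function.Injective pt) {c d : ι} (hdc : d ≠ c)
    (x : Bool) : OverFirst pt (next (pt (c, x))) d ↔ OverFirst pt (pt (c, x)) d :=
  have hne (y : Bool) : pt (d, y) ≠ pt (c, x) := hpt.ne fun h => hdc (congrArg Prod.fst h)
  cdist_next_lt_cdist_next_iff (hne true) (hne false)

theorem overFirst_self_iff (hpt : Function.Injective pt) (c : ι) (x : Bool) :
    OverFirst pt (pt (c, x)) c ↔ x = true := by
  have hlt : cdist (pt (c, x)) (pt (c, x)) < cdist (pt (c, x)) (pt (c, !x)) :=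
    cdist_self_lt_cdist (hpt.ne (by simp))
  cases x
  · exact iff_of_false hlt.not_gt Bool.false_ne_true
  · exact iff_of_true hlt rfl

theorem overFirst_next_self_iff (hpt : Function.Injective pt) (c : ι) (x : Bool) :
    OverFirst pt (next (pt (c, x))) c ↔ x = false := by
  have hlt : cdist (next (pt (c, x))) (pt (c, !x)) < cdist (next (pt (c, x))) (pt (c, x)) :=
    cdist_next_lt_cdist_next_self (hpt.ne (by simp))
  cases x
  · exact iff_of_true hlt rfl
  · exact iff_of_false hlt.not_gt Bool.noConfusion

variable [Fintype ι] [AddCommMonoid A]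

/-- The Cheng coloring of the arc immediately preceding `i`, as in `lam`, with the signs of the
crossings replaced by weights `w` in a commutative monoid. -/
def weightedLam (pt : ι × Bool → Fin m) (w : ι → A) (i : Fin m) : A :=
  ∑ c, if OverFirst pt i c then w c else 0

theorem weightedLam_next_add (hpt : Function.Injective pt) (w : ι → A) (c : ι) (x : Bool) :
    weightedLam pt w (next (pt (c, x))) + (if x = true then w c else 0) =
      weightedLam pt w (pt (c, x)) + (if x = false then w c else 0) := by
  classical
  have hothers : ∑ d ∈ univ.erase c, (if OverFirst pt (next (pt (c, x))) d then w d else 0) =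
      ∑ d ∈ univ.erase c, if OverFirst pt (pt (c, x)) d then w d else 0 :=
    sum_congr rfl fun d hd => by
      simp only [overFirst_next_iff_of_ne hpt (ne_of_mem_erase hd)]
  unfold weightedLam
  rw [← add_sum_erase univ _ (mem_univ c), hothers,
    ← add_sum_erase univ (fun d => if OverFirst pt (pt (c, x)) d then w d else 0) (mem_univ c)]
  simp only [overFirst_self_iff hpt, overFirst_next_self_iff hpt]
  abel

theorem lam_next_eq_general (hpt : Function.Injective pt) (w : ι → A) (c : ι) (x : Bool)
    (i : Fin m) (hi : pt (c, x) = i) :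
    (x = true → weightedLam pt w (next i) + w c = weightedLam pt w i) ∧
    (x = false → weightedLam pt w (next i) = weightedLam pt w i + w c) := by
  subst hi
  have h := weightedLam_next_add hpt w c x
  constructor <;> rintro rfl <;> simpa using h

end ChengColoring

theorem lam_eq_weightedLam {n : ℕ} (G : GaussCode n) : G.lam = weightedLam G.pt G.sign :=
  rfl

/-- Let `G` be a Gauss code and let `i = pt (c, x)` be the point of `G`
labelled `(c, x)`.  The arc immediately preceding `i` is indexed by `i` and the arc
immediately following `i` is indexed by `next i`.  Then `λ(α') = λ(α) - ε(c)` if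
`x = O` and `λ(α') = λ(α) + ε(c)` if `x = U`: `λ` satisfies the Cheng coloring rule at
every classical crossing, so every virtual knot diagram admits a Cheng coloring. -/
theorem lam_next_eq {n : ℕ} (G : GaussCode n) (c : Fin n) (x : Bool) (i : Fin (2 * n))
    (hi : G.pt (c, x) = i) :
    (x = true → G.lam (next i) = G.lam i - G.sign c) ∧
    (x = false → G.lam (next i) = G.lam i + G.sign c) := by
  rw [lam_eq_weightedLam]
  exact (lam_next_eq_general G.inj G.sign c x i hi).imp_left (eq_sub_of_add_eq ∘ ·)

end GaussCode
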